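/- arXiv:2211.05460 — 3 statements merged into one kernel-verified Lean document; each statement's English description precedes it below -/
import Mathlib

section
/- Let d_{n,2}(q) = Σ_{w ∈ F_{n,2}} q^{deg₂(w)} ∈ ℤ[q]. Then for all n ≥ 3, d_{n,2}(q) = d_{n−1,2}(q) + q²·d_{n−2,2}(q), with initial values d_{1,2}(q) = 2q⁴ and d_{2,2}(q) = q⁴ + 2q⁵. Moreover, for all n ≥ 2, d_{n,2}(q) = Σ_{i=1}^{n} ( C(n−1−⌊i/2⌋, ⌊(i−1)/2⌋) + C(n−2−⌊(i−1)/2⌋, ⌊(i−2)/2⌋) )·q^{i+3}, where C(a,b) denotes the binomial coefficient of integers with C(a,b) = 0 whenever b < 0 or b > a, and ⌊·⌋ is the integer floor. -/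
open Finset

/-- Number of `1`s in a binary word. -/
def wOnes (w : List Bool) : ℕ := w.count true

/-- Indicator of `w₁ = c` (first letter). -/
def indHead (c : Bool) (w : List Bool) : ℕ := if w.head? = some c then 1 else 0

/-- Indicator of `wₙ = c` (last letter). -/
def indLast (c : Bool) (w : List Bool) : ℕ := if w.getLast? = some c then 1 else 0

/-- The set `F_{n,2}` of binary words of length `n` avoiding two consecutive `1`s. -/
def kbonWords (n k : ℕ) : Finset (Fin n → Bool) :=
  Finset.univ.filter (fun w => ¬ (List.replicate k true <:+: List.ofFn w))

/-- Number of degree-2 vertices of the Fibonacci graph of `w`: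
`deg₂(w) = 2 + 2s(w) + [w₁ = 0] + [wₙ = 0]`. -/
def wDeg2 (w : List Bool) : ℕ := 2 + 2 * wOnes w + indHead false w + indLast false w

/-- `d_{n,2}(q) = Σ_{w ∈ F_{n,2}} q^{deg₂(w)} ∈ ℤ[q]`. -/
noncomputable def dpoly2 (n : ℕ) : Polynomial ℤ :=
  ∑ w ∈ kbonWords n 2, Polynomial.X ^ wDeg2 (List.ofFn w)

/-- Binomial coefficient of integers: `chooseZ a b = C(a,b)`, which is `0` whenever
`b < 0` or `b > a`. -/
def chooseZ (a b : ℤ) : ℤ := if 0 ≤ b ∧ b ≤ a then (Nat.choose a.toNat b.toNat : ℤ) else 0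

open Polynomial in
noncomputable def gW (l : List Bool) : Polynomial ℤ :=
  if [true, true] <:+: l then 0 else X ^ (2 * wOnes l + indLast false (false :: l))

open Polynomial in
noncomputable def dW (l : List Bool) : Polynomial ℤ :=
  if [true, true] <:+: l then 0 else X ^ wDeg2 l

noncomputable def tW (n : ℕ) (f : List Bool → Polynomial ℤ) : Polynomial ℤ :=
  ∑ w : Fin n → Bool, f (List.ofFn w)

theorem tW_zero (f : List Bool → Polynomial ℤ) : tW 0 f = f [] := by
  simp [tW]

theorem tW_succ (n : ℕ) (f : List Bool → Polynomial ℤ) :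
    tW (n + 1) f = tW n (fun l => f (true :: l)) + tW n (fun l => f (false :: l)) := by
  unfold tW
  rw [← (Fin.consEquiv (fun _ : Fin (n + 1) => Bool)).sum_comp, Fintype.sum_prod_type]
  simp [Fin.consEquiv, List.ofFn_succ]

theorem tW_mul (n : ℕ) (c : Polynomial ℤ) (f : List Bool → Polynomial ℤ) :
    tW n (fun l => c * f l) = c * tW n f := by
  simp [tW, Finset.mul_sum]

theorem inf_f (l : List Bool) : ([true, true] <:+: false :: l) ↔ ([true, true] <:+: l) := by
  simp [List.infix_cons_iff, List.cons_prefix_cons]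

theorem inf_tf (l : List Bool) :
    ([true, true] <:+: true :: false :: l) ↔ ([true, true] <:+: l) := by
  simp [List.infix_cons_iff, List.cons_prefix_cons]

theorem inf_tt (l : List Bool) : [true, true] <:+: true :: true :: l := by
  simp [List.infix_cons_iff, List.cons_prefix_cons]

theorem gW_f (l : List Bool) : gW (false :: l) = gW l := by
  simp [gW, inf_f, wOnes, indLast, List.getLast?_cons_cons]

theorem gW_tf (l : List Bool) : gW (true :: false :: l) = Polynomial.X ^ 2 * gW l := by
  simp only [gW, inf_tf, wOnes, indLast, List.getLast?_cons_cons]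
  split_ifs <;> simp <;> ring

theorem gW_tt (l : List Bool) : gW (true :: true :: l) = 0 := by
  simp [gW, inf_tt]

theorem dW_f (l : List Bool) : dW (false :: l) = Polynomial.X ^ 3 * gW l := by
  simp only [gW, dW, inf_f, wDeg2, wOnes, indHead, indLast]
  split_ifs <;> simp_all <;> ring

theorem dW_tf (l : List Bool) : dW (true :: false :: l) = Polynomial.X ^ 4 * gW l := by
  simp only [gW, dW, inf_tf, wDeg2, wOnes, indHead, indLast, List.getLast?_cons_cons]
  split_ifs <;> simp_all <;> ring

theorem dW_tt (l : List Bool) : dW (true :: true :: l) = 0 := by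
  simp [dW, inf_tt]

theorem tW_null (n : ℕ) : tW n (fun _ => 0) = 0 := by simp [tW]

theorem gW_rec (n : ℕ) : tW (n + 2) gW = tW (n + 1) gW + Polynomial.X ^ 2 * tW n gW := by
  rw [tW_succ, tW_succ n (fun l => gW (true :: l))]
  simp only [gW_f, gW_tf, gW_tt, tW_null, tW_mul]
  ring

theorem dW_rec (n : ℕ) :
    tW (n + 2) dW = Polynomial.X ^ 3 * tW (n + 1) gW + Polynomial.X ^ 4 * tW n gW := by
  rw [tW_succ, tW_succ n (fun l => dW (true :: l))]
  simp only [dW_f, dW_tf, dW_tt, tW_null, tW_mul]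
  ring

theorem dpoly2_eq (n : ℕ) : dpoly2 n = tW n dW := by
  simp only [dpoly2, kbonWords, tW, dW, Finset.sum_filter, List.replicate, ite_not]

theorem g0 : tW 0 gW = Polynomial.X := by
  simp [tW_zero, gW, wOnes, indLast]

theorem g1 : tW 1 gW = Polynomial.X + Polynomial.X ^ 2 := by
  rw [tW_succ, tW_zero, tW_zero]
  simp [gW, wOnes, indLast, List.infix_cons_iff, List.cons_prefix_cons]
  ring

theorem d1 : dpoly2 1 = 2 * Polynomial.X ^ 4 := by
  rw [dpoly2_eq, tW_succ, tW_zero, tW_zero]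
  simp [dW, wDeg2, wOnes, indLast, indHead, List.infix_cons_iff, List.cons_prefix_cons]
  ring

theorem d2 : dpoly2 2 = Polynomial.X ^ 4 + 2 * Polynomial.X ^ 5 := by
  rw [dpoly2_eq, dW_rec, g0, g1]
  ring

theorem drec (n : ℕ) :
    dpoly2 (n + 3) = dpoly2 (n + 2) + Polynomial.X ^ 2 * dpoly2 (n + 1) := by
  rcases n with _ | n
  · rw [d1, d2, dpoly2_eq, dW_rec, gW_rec, g0, g1]
    ring
  · simp only [dpoly2_eq]
    rw [dW_rec (n + 2), dW_rec (n + 1), dW_rec n, gW_rec (n + 1), gW_rec n]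
    ring

theorem chooseZ_pascal (a b : ℤ) (h : ¬ (a = 0 ∧ b = 0)) :
    chooseZ a b = chooseZ (a - 1) b + chooseZ (a - 1) (b - 1) := by
  by_cases hb : b < 0
  · simp only [chooseZ]
    rw [if_neg (by omega), if_neg (by omega), if_neg (by omega)]; rfl
  by_cases ha : a < b
  · simp only [chooseZ]
    rw [if_neg (by omega), if_neg (by omega), if_neg (by omega)]; rfl
  obtain ⟨b, rfl⟩ := Int.eq_ofNat_of_zero_le (not_lt.1 hb)
  obtain ⟨a, rfl⟩ := Int.eq_ofNat_of_zero_le (show 0 ≤ a by omega)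
  obtain _ | a := a
  · omega
  obtain _ | b := b
  · simp [chooseZ]
    omega
  · simp only [chooseZ]
    have e1 : ((a + 1 : ℕ) : ℤ) - 1 = a := by omega
    have e2 : ((b + 1 : ℕ) : ℤ) - 1 = b := by omega
    rw [e1, e2]
    simp only [Int.toNat_natCast]
    rw [Nat.choose_succ_succ]
    split_ifs with h1 h2 h3 <;> first
      | omega
      | (push_cast; ring1)
      | (rw [Nat.choose_eq_zero_of_lt (show a < b.succ by omega)]; push_cast; ring1)

def cW (n i : ℤ) : ℤ := chooseZ (n - 1 - Int.fdiv i 2) (Int.fdiv (i - 1) 2)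
              + chooseZ (n - 2 - Int.fdiv (i - 1) 2) (Int.fdiv (i - 2) 2)

theorem cW_rec (n i : ℤ) (hn : 4 ≤ n) : cW n i = cW (n - 1) i + cW (n - 2) (i - 2) := by
  simp only [cW, Int.fdiv_eq_ediv_of_nonneg _ (show (0 : ℤ) ≤ 2 by norm_num)]
  rw [chooseZ_pascal _ _ (by omega), chooseZ_pascal (n - 2 - _) _ (by omega)]
  rw [show n - 1 - i / 2 - 1 = n - 1 - 1 - i / 2 by omega,
    show n - 2 - 1 - (i - 2) / 2 = n - 1 - 1 - i / 2 by omega,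
    show (i - 2 - 1) / 2 = (i - 1) / 2 - 1 by omega,
    show n - 2 - (i - 1) / 2 - 1 = n - 1 - 2 - (i - 1) / 2 by omega,
    show n - 2 - 2 - ((i - 1) / 2 - 1) = n - 1 - 2 - (i - 1) / 2 by omega,
    show (i - 2 - 2) / 2 = (i - 2) / 2 - 1 by omega]
  ring

theorem cW_top (n : ℤ) : cW (n - 1) n = 0 := by
  simp only [cW, chooseZ, Int.fdiv_eq_ediv_of_nonneg _ (show (0 : ℤ) ≤ 2 by norm_num)]
  rw [if_neg (by omega), if_neg (by omega)]; rfl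

theorem cW_bot (n i : ℤ) (h : i ≤ 0) : cW n i = 0 := by
  simp only [cW, chooseZ, Int.fdiv_eq_ediv_of_nonneg _ (show (0 : ℤ) ≤ 2 by norm_num)]
  rw [if_neg (by omega), if_neg (by omega)]; rfl

noncomputable def sW (n : ℕ) : Polynomial ℤ :=
  ∑ j ∈ Finset.range n, Polynomial.C (cW n ((j : ℤ) + 1)) * Polynomial.X ^ (j + 4)

theorem sW_rec (n : ℕ) : sW (n + 4) = sW (n + 3) + Polynomial.X ^ 2 * sW (n + 2) := by
  have h1 : sW (n + 3) = ∑ j ∈ Finset.range (n + 4),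
      Polynomial.C (cW ((n + 4 : ℕ) - 1 : ℤ) ((j : ℤ) + 1)) * Polynomial.X ^ (j + 4) := by
    rw [Finset.sum_range_succ]
    have := cW_top ((n + 4 : ℕ) : ℤ)
    rw [show (((n + 3 : ℕ) : ℤ) + 1) = ((n + 4 : ℕ) : ℤ) by push_cast; ring, this, sW,
      show (((n + 4 : ℕ) : ℤ) - 1) = ((n + 3 : ℕ) : ℤ) by push_cast; ring]
    simp
  have h2 : Polynomial.X ^ 2 * sW (n + 2) = ∑ j ∈ Finset.range (n + 4),
      Polynomial.C (cW ((n + 4 : ℕ) - 2 : ℤ) ((j : ℤ) + 1 - 2)) * Polynomial.X ^ (j + 4) := by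
    rw [Finset.sum_range_succ', Finset.sum_range_succ', cW_bot _ _ (by norm_num),
      cW_bot _ _ (by norm_num), sW, Finset.mul_sum]
    simp only [map_zero, zero_mul, add_zero]
    refine Finset.sum_congr rfl fun j _ => ?_
    rw [show (((n + 4 : ℕ) : ℤ) - 2) = ((n + 2 : ℕ) : ℤ) by push_cast; ring,
      show (((j + 1 + 1 : ℕ) : ℤ) + 1 - 2) = (j : ℤ) + 1 by push_cast; ring]
    ring
  rw [h1, h2, ← Finset.sum_add_distrib, sW]
  refine Finset.sum_congr rfl fun j _ => ?_
  rw [cW_rec _ _ (by push_cast; omega), map_add]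
  ring

theorem s2 : sW 2 = dpoly2 2 := by
  have e1 : cW 2 1 = 1 := by decide
  have e2 : cW 2 2 = 2 := by decide
  rw [d2]
  simp [sW, Finset.sum_range_succ, e1, e2, one_add_one_eq_two]

theorem s3 : sW 3 = dpoly2 3 := by
  have e1 : cW 3 1 = 1 := by decide
  have e2 : cW 3 2 = 2 := by decide
  have e3 : cW 3 3 = 2 := by decide
  rw [drec 0, d2, d1]
  have t : (2 : ℤ) + 1 = 3 := by norm_num
  simp [sW, Finset.sum_range_succ, e1, e2, e3, one_add_one_eq_two, t]
  ring

theorem sW_eq (n : ℕ) : dpoly2 (n + 2) = sW (n + 2) ∧ dpoly2 (n + 3) = sW (n + 3) := by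
  induction n with
  | zero => exact ⟨s2.symm, s3.symm⟩
  | succ k ih =>
    refine ⟨ih.2, ?_⟩
    rw [drec (k + 1), sW_rec k, ← ih.1, ← ih.2]

theorem fibonacci_degree2_polynomial :
    (∀ n : ℕ, 3 ≤ n →
      dpoly2 n = dpoly2 (n - 1) + Polynomial.X ^ 2 * dpoly2 (n - 2))
    ∧ dpoly2 1 = 2 * Polynomial.X ^ 4
    ∧ dpoly2 2 = Polynomial.X ^ 4 + 2 * Polynomial.X ^ 5
    ∧ ∀ n : ℕ, 2 ≤ n →
        dpoly2 n = ∑ i ∈ Finset.Icc 1 n,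
          Polynomial.C
            (chooseZ ((n : ℤ) - 1 - Int.fdiv (i : ℤ) 2) (Int.fdiv ((i : ℤ) - 1) 2)
              + chooseZ ((n : ℤ) - 2 - Int.fdiv ((i : ℤ) - 1) 2) (Int.fdiv ((i : ℤ) - 2) 2))
            * Polynomial.X ^ (i + 3) := by
  refine ⟨fun n hn => ?_, d1, d2, fun n hn => ?_⟩
  · obtain ⟨m, rfl⟩ := Nat.exists_eq_add_of_le' hn
    exact drec m
  · obtain ⟨m, rfl⟩ := Nat.exists_eq_add_of_le' hn
    rw [(sW_eq m).1, sW, Finset.range_eq_Ico]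
    have := Finset.sum_Ico_add' (fun i : ℕ => Polynomial.C (cW ((m + 2 : ℕ) : ℤ) (i : ℤ))
      * Polynomial.X ^ (i + 3)) 0 (m + 2) 1
    simp only [Nat.cast_add, Nat.cast_one] at this ⊢
    exact this
end

section
/- Among the total degrees of vertices of all Fibonacci graphs on words of length n, the proportion of vertices of degree 2 tends to (7 − √5)/22 as n → ∞; that is, lim_{n→∞} ( Σ_{w ∈ F_{n,2}} deg₂(w) ) / ( Σ_{w ∈ F_{n,2}} ver(w) ) = (7 − √5)/22. -/
open Finset Filter

/-- Number of vertices of the Fibonacci graph of `w`: `ver(w) = 2n + 2 + 2s(w)`. -/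
def wVer (n : ℕ) (w : List Bool) : ℕ := 2 * n + 2 + 2 * wOnes w

/-- Number of degree-4 vertices: `deg₄(w) = 2s(w) − [w₁ = 1] − [wₙ = 1]`. -/
def wDeg4 (w : List Bool) : ℕ := 2 * wOnes w - indHead true w - indLast true w

/-- Number of degree-3 vertices: `deg₃(w) = ver(w) − deg₂(w) − deg₄(w)`. -/
def wDeg3 (n : ℕ) (w : List Bool) : ℕ := wVer n w - wDeg2 w - wDeg4 w

lemma sum_fin_succ (n : ℕ) (g : List Bool → ℝ) :
    ∑ w : Fin (n+1) → Bool, g (List.ofFn w) =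
      ∑ w : Fin n → Bool, g (false :: List.ofFn w) + ∑ w : Fin n → Bool, g (true :: List.ofFn w) := by
  rw [← (Fin.consEquiv (fun _ : Fin (n+1) => Bool)).sum_comp, Fintype.sum_prod_type]
  simp [Fin.consEquiv, List.ofFn_succ]
  ring

def okw (l : List Bool) : Prop := ¬ (List.replicate 2 true <:+: l)

lemma okw_false (l : List Bool) : okw (false :: l) ↔ okw l := by
  simp [okw, List.infix_cons_iff, List.replicate]

lemma okw_tf (l : List Bool) : okw (true :: false :: l) ↔ okw l := by
  simp [okw, List.infix_cons_iff, List.replicate]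

lemma okw_tt (l : List Bool) : ¬ okw (true :: true :: l) := by
  simp [okw, List.infix_cons_iff, List.replicate]

noncomputable def T (n : ℕ) (f : List Bool → ℝ) : ℝ := ∑ w ∈ kbonWords n 2, f (List.ofFn w)

open Classical in
lemma T_eq (n : ℕ) (f : List Bool → ℝ) :
    T n f = ∑ w : Fin n → Bool, if okw (List.ofFn w) then f (List.ofFn w) else 0 := by
  rw [T, kbonWords, Finset.sum_filter]
  refine Finset.sum_congr rfl fun w _ => ?_
  unfold okw
  split_ifs <;> rfl

lemma T_rec (n : ℕ) (f : List Bool → ℝ) :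
    T (n+2) f = T (n+1) (fun l => f (false :: l)) + T n (fun l => f (true :: false :: l)) := by
  classical
  rw [T_eq, T_eq, T_eq, sum_fin_succ (n+1) (fun l => if okw l then f l else 0),
    sum_fin_succ n (fun l => if okw (true :: l) then f (true :: l) else 0)]
  simp [okw_false, okw_tf, okw_tt]

lemma T_add (n : ℕ) (f g : List Bool → ℝ) : T n (fun l => f l + g l) = T n f + T n g := by
  simp [T, Finset.sum_add_distrib]

lemma T_mul (n : ℕ) (c : ℝ) (g : List Bool → ℝ) : T n (fun l => c * g l) = c * T n g := by
  simp [T, Finset.mul_sum]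

lemma T_zero (f : List Bool → ℝ) : T 0 f = f [] := by
  classical
  rw [T_eq]; simp [okw, List.replicate]

lemma T_one' (f : List Bool → ℝ) : T 1 f = f [false] + f [true] := by
  classical
  rw [T_eq, sum_fin_succ 0 (fun l => if okw l then f l else 0)]
  simp [okw, List.replicate, List.infix_cons_iff]

lemma T_card (n : ℕ) : T n (fun _ => 1) = Nat.fib (n+2) ∧
    T (n+1) (fun _ => 1) = Nat.fib (n+3) := by
  induction n with
  | zero => rw [T_zero, T_one']; norm_num [Nat.fib_add_two]
  | succ n ih =>
    refine ⟨ih.2, ?_⟩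
    rw [T_rec, ih.1, ih.2, Nat.fib_add_two (n := n+2)]
    push_cast; ring

lemma T_ones_rec (n : ℕ) : T (n+2) (fun l => (wOnes l : ℝ)) =
    T (n+1) (fun l => (wOnes l : ℝ)) + (T n (fun l => (wOnes l : ℝ)) + T n (fun _ => 1)) := by
  rw [T_rec, ← T_add]
  simp [wOnes]

lemma T_ones (n : ℕ) :
    5 * T n (fun l => (wOnes l : ℝ)) = n * Nat.fib (n+1) + 2 * (n+1) * Nat.fib n ∧
    5 * T (n+1) (fun l => (wOnes l : ℝ)) = (n+1) * Nat.fib (n+2) + 2 * (n+2) * Nat.fib (n+1) := by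
  induction n with
  | zero => rw [T_zero, T_one']; norm_num [wOnes]
  | succ n ih =>
    obtain ⟨h1, h2⟩ := ih
    refine ⟨by rw [h2]; push_cast; ring, ?_⟩
    rw [T_ones_rec, (T_card n).1, mul_add, mul_add, h1, h2]
    have a := Nat.fib_add_two (n := n)
    have b := Nat.fib_add_two (n := n+1)
    rw [show n + 1 + 2 = n + 3 from rfl] at *
    rw [b, show n+1+1 = n+2 from rfl, a]
    push_cast; ring

lemma E_bound (n : ℕ) :
    0 ≤ T n (fun l => (indHead false l : ℝ) + indLast false l) ∧
    T n (fun l => (indHead false l : ℝ) + indLast false l) ≤ 2 * T n (fun _ => 1) := by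
  constructor
  · exact Finset.sum_nonneg fun _ _ => by positivity
  · rw [← T_mul]
    refine Finset.sum_le_sum fun w _ => ?_
    simp only [indHead, indLast]
    split_ifs <;> norm_num

lemma fib_ratio : Tendsto (fun n : ℕ => (Nat.fib (n+1) : ℝ) / Nat.fib (n+2)) atTop
    (nhds (Real.goldenRatio⁻¹)) := by
  have := (tendsto_fib_succ_div_fib_atTop.comp (tendsto_add_atTop_nat 1)).inv₀ Real.goldenRatio_ne_zero
  refine this.congr fun n => ?_
  simp

lemma fib_ratio2 : Tendsto (fun n : ℕ => (Nat.fib n : ℝ) / Nat.fib (n+2)) atTop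
    (nhds (1 - Real.goldenRatio⁻¹)) := by
  refine (fib_ratio.const_sub 1).congr fun n => ?_
  have : (0:ℝ) < Nat.fib (n+2) := by exact_mod_cast Nat.fib_pos.2 (by omega)
  field_simp
  rw [Nat.fib_add_two]; push_cast; ring

theorem degree2_proportion :
    Tendsto
      (fun n : ℕ =>
        ((∑ w ∈ kbonWords n 2, (wDeg2 (List.ofFn w) : ℝ)) /
          (∑ w ∈ kbonWords n 2, (wVer n (List.ofFn w) : ℝ))))
      atTop (nhds ((7 - Real.sqrt 5) / 22)) := by
  set N : ℕ → ℝ := fun n => T n (fun _ => 1) with hN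
  set S : ℕ → ℝ := fun n => T n (fun l => (wOnes l : ℝ)) with hS
  set E : ℕ → ℝ := fun n => T n (fun l => (indHead false l : ℝ) + indLast false l) with hE
  have hNpos : ∀ n, 0 < N n := fun n => by
    simp only [hN, (T_card n).1]; exact_mod_cast Nat.fib_pos.2 (by omega)
  have hnum : ∀ n, ∑ w ∈ kbonWords n 2, (wDeg2 (List.ofFn w) : ℝ) = 2 * N n + 2 * S n + E n := by
    intro n
    simp only [hN, hS, hE]
    rw [← T_mul, ← T_mul, ← T_add, ← T_add]
    refine Finset.sum_congr rfl fun w _ => ?_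
    simp [wDeg2]; ring
  have hden : ∀ n, ∑ w ∈ kbonWords n 2, (wVer n (List.ofFn w) : ℝ)
      = (2 * n + 2) * N n + 2 * S n := by
    intro n
    simp only [hN, hS]
    rw [← T_mul, ← T_mul, ← T_add]
    refine Finset.sum_congr rfl fun w _ => ?_
    simp [wVer]
  simp only [hnum, hden]
  have hinv : Tendsto (fun n : ℕ => (1:ℝ) / n) atTop (nhds 0) := tendsto_one_div_atTop_nhds_zero_nat
  have hSl : Tendsto (fun n : ℕ => S n / (n * N n)) atTop
      (nhds ((Real.goldenRatio⁻¹ + 2 * (1 + 0) * (1 - Real.goldenRatio⁻¹)) / 5)) := by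
    refine ((fib_ratio.add (((hinv.const_add 1).const_mul 2).mul fib_ratio2)).div_const 5).congr' ?_
    filter_upwards [eventually_gt_atTop 0] with n hn
    have h1 := (T_ones n).1
    have h2 : S n = (n * Nat.fib (n+1) + 2 * (n+1) * Nat.fib n) / 5 := by
      rw [← h1]; simp only [hS]; ring
    have h3 : N n = Nat.fib (n+2) := (T_card n).1
    have h4 := hNpos n
    rw [h3] at h4
    rw [h2, h3]
    have : (0:ℝ) < n := by exact_mod_cast hn
    field_simp
  have hEl : Tendsto (fun n : ℕ => E n / (n * N n)) atTop (nhds 0) := by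
    have h0 : Tendsto (fun n : ℕ => 2 * ((1:ℝ) / n)) atTop (nhds 0) := by
      simpa using hinv.const_mul 2
    refine squeeze_zero' (Eventually.of_forall fun n => ?_) ?_ h0
    · have := (E_bound n).1
      have := hNpos n
      positivity
    · filter_upwards [eventually_gt_atTop 0] with n hn
      have h4 := hNpos n
      have : (0:ℝ) < n := by exact_mod_cast hn
      have h5 : E n ≤ 2 * N n := (E_bound n).2
      rw [div_le_iff₀ (by positivity)]
      field_simp
      linarith
  have hs5 : Real.sqrt 5 ^ 2 = 5 := Real.sq_sqrt (by norm_num)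
  have hs0 : 0 < Real.sqrt 5 := by positivity
  have hp : (Real.goldenRatio⁻¹ + 2 * (1 + 0) * (1 - Real.goldenRatio⁻¹)) / 5
      = (5 - Real.sqrt 5) / 10 := by
    rw [Real.inv_goldenRatio, Real.goldenConj]; ring
  rw [hp] at hSl
  have hs3 : Real.sqrt 5 < 5 := by nlinarith
  have key := (((hinv.const_mul 2).add (hSl.const_mul 2)).add hEl).div
    (((hinv.const_mul 2).const_add 2).add (hSl.const_mul 2)) (by
      have : 0 < (5 - Real.sqrt 5) / 10 := by linarith
      simp only [mul_zero]; linarith)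
  have hval : (2 * 0 + 2 * ((5 - Real.sqrt 5) / 10) + 0) / (2 + 2 * 0 + 2 * ((5 - Real.sqrt 5) / 10))
      = (7 - Real.sqrt 5) / 22 := by
    rw [div_eq_div_iff (by linarith) (by norm_num)]
    nlinarith
  rw [hval] at key
  refine key.congr' ?_
  filter_upwards [eventually_gt_atTop 0] with n hn
  have h4 := hNpos n
  have h6 : (0:ℝ) < n := by exact_mod_cast hn
  have h7 : (0:ℝ) < n * N n := by positivity
  simp only [Pi.div_apply]
  rw [← div_div_div_cancel_right₀ h7.ne' (2 * N n + 2 * S n + E n)]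
  congr 1
  · field_simp
  · field_simp
end

section
/- Among the total degrees of vertices of all Fibonacci graphs on words of length n, the proportion of vertices of degree 3 tends to (4 + √5)/11 as n → ∞; that is, lim_{n→∞} ( Σ_{w ∈ F_{n,2}} deg₃(w) ) / ( Σ_{w ∈ F_{n,2}} ver(w) ) = (4 + √5)/11. -/
open Finset Filter

theorem sumCons {n : ℕ} (h : List Bool → ℕ) :
    ∑ w : Fin (n+1) → Bool, h (List.ofFn w) =
      ∑ w : Fin n → Bool, h (false :: List.ofFn w) + ∑ w : Fin n → Bool, h (true :: List.ofFn w) := by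
  rw [← (Fin.consEquiv (fun _ : Fin (n+1) => Bool)).sum_comp, Fintype.sum_prod_type, Fintype.sum_bool, add_comm]
  simp [Fin.consEquiv, List.ofFn_succ]

theorem T_eq_s17 (n : ℕ) (g : List Bool → ℕ) :
    ∑ w ∈ kbonWords n 2, g (List.ofFn w) =
      ∑ w : Fin n → Bool, (fun l => if [true, true] <:+: l then 0 else g l) (List.ofFn w) := by
  unfold kbonWords
  rw [Finset.sum_filter]
  apply Finset.sum_congr rfl
  intro w _
  simp only [ite_not]
  rfl

theorem T_rec_s17 (n : ℕ) (g : List Bool → ℕ) :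
    ∑ w ∈ kbonWords (n+2) 2, g (List.ofFn w) =
      ∑ w ∈ kbonWords (n+1) 2, g (false :: List.ofFn w) +
      ∑ w ∈ kbonWords n 2, g (true :: false :: List.ofFn w) := by
  rw [T_eq_s17, T_eq_s17 _ (fun l => g (false :: l)), T_eq_s17 _ (fun l => g (true :: false :: l)),
    sumCons (fun l => if [true, true] <:+: l then 0 else g l)]
  congr 1
  · simp [List.infix_cons_iff]
  · rw [sumCons (fun l => (fun l => if [true, true] <:+: l then 0 else g l) (true :: l))]
    simp [List.infix_cons_iff]

theorem T_card_s17 (n : ℕ) : (kbonWords n 2).card = Nat.fib (n+2) ∧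
    (kbonWords (n+1) 2).card = Nat.fib (n+3) := by
  induction n with
  | zero => decide
  | succ n ih =>
    refine ⟨ih.2, ?_⟩
    have := T_rec_s17 n (fun _ => 1)
    simp only [Finset.sum_const, smul_eq_mul, mul_one] at this
    rw [this, ih.1, ih.2, Nat.fib_add_two (n := n+2), add_comm]

theorem T_ones_s17 (n : ℕ) :
    5 * ∑ w ∈ kbonWords n 2, wOnes (List.ofFn w) = 2*(n+1)*Nat.fib n + n * Nat.fib (n+1) ∧
    5 * ∑ w ∈ kbonWords (n+1) 2, wOnes (List.ofFn w)
      = 2*(n+2)*Nat.fib (n+1) + (n+1) * Nat.fib (n+2) := by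
  induction n with
  | zero => decide
  | succ n ih =>
    refine ⟨ih.2, ?_⟩
    have h := T_rec_s17 n wOnes
    have e1 : ∀ l, wOnes (false :: l) = wOnes l := by intro l; simp [wOnes]
    have e2 : ∀ l, wOnes (true :: false :: l) = wOnes l + 1 := by intro l; simp [wOnes]
    simp only [e1, e2, Finset.sum_add_distrib, Finset.sum_const, smul_eq_mul, mul_one,
      (T_card_s17 n).1] at h
    rw [show n + 1 + 1 = n + 2 from rfl, h, mul_add, mul_add, ih.1, ih.2,
      show n + 1 + 2 = n + 1 + 2 from rfl, Nat.fib_add_two (n := n+1), Nat.fib_add_two (n := n)]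
    ring

theorem deg3_bound (n : ℕ) (w : Fin n → Bool) :
    |(wDeg3 n (List.ofFn w) : ℝ) - (2 * n - 2 * wOnes (List.ofFn w))| ≤ 4 := by
  have hs : wOnes (List.ofFn w) ≤ n := by
    have := List.count_le_length (a := true) (l := List.ofFn w)
    simpa [wOnes] using this
  have hi : ∀ c l, indHead c l ≤ 1 := by intro c l; unfold indHead; split <;> simp
  have hj : ∀ c l, indLast c l ≤ 1 := by intro c l; unfold indLast; split <;> simp
  have h1 := hi true (List.ofFn w)
  have h2 := hi false (List.ofFn w)
  have h3 := hj true (List.ofFn w)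
  have h4 := hj false (List.ofFn w)
  have : wDeg3 n (List.ofFn w) + 2 * wOnes (List.ofFn w) ≤ 2 * n + 4 ∧
      2 * n ≤ wDeg3 n (List.ofFn w) + 2 * wOnes (List.ofFn w) + 4 := by
    unfold wDeg3 wDeg2 wDeg4 wVer
    omega
  obtain ⟨a, b⟩ := this
  have a' : (wDeg3 n (List.ofFn w) : ℝ) + 2 * wOnes (List.ofFn w) ≤ 2 * n + 4 := by exact_mod_cast a
  have b' : (2 * n : ℝ) ≤ wDeg3 n (List.ofFn w) + 2 * wOnes (List.ofFn w) + 4 := by exact_mod_cast b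
  rw [abs_le]; constructor <;> linarith

theorem degree3_proportion :
    Tendsto
      (fun n : ℕ =>
        ((∑ w ∈ kbonWords n 2, (wDeg3 n (List.ofFn w) : ℝ)) /
          (∑ w ∈ kbonWords n 2, (wVer n (List.ofFn w) : ℝ))))
      atTop (nhds ((4 + Real.sqrt 5) / 11)) := by
  have hr : Tendsto (fun n : ℕ => (Nat.fib (n+1) : ℝ) / Nat.fib n) atTop (nhds Real.goldenRatio) :=
    tendsto_fib_succ_div_fib_atTop
  have hi : Tendsto (fun n : ℕ => 1 / (n : ℝ)) atTop (nhds 0) := tendsto_one_div_atTop_nhds_zero_nat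
  set r : ℕ → ℝ := fun n => (Nat.fib (n+1) : ℝ) / Nat.fib n with hrdef
  set i : ℕ → ℝ := fun n => 1 / (n : ℝ) with hidef
  set E : ℕ → ℝ := fun n => ∑ w ∈ kbonWords n 2,
    ((wDeg3 n (List.ofFn w) : ℝ) - (2 * n - 2 * wOnes (List.ofFn w))) with hE
  have hS : ∀ n, ∑ w ∈ kbonWords n 2, (wOnes (List.ofFn w) : ℝ)
      = (2*(n+1)*Nat.fib n + n * Nat.fib (n+1)) / 5 := by
    intro n
    have := (T_ones_s17 n).1
    have h' : (5 : ℝ) * ∑ w ∈ kbonWords n 2, (wOnes (List.ofFn w) : ℝ)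
      = (2*(n+1)*Nat.fib n + n * Nat.fib (n+1)) := by exact_mod_cast this
    linarith
  have hc : ∀ n, ((kbonWords n 2).card : ℝ) = Nat.fib n + Nat.fib (n+1) := by
    intro n
    rw [(T_card_s17 n).1, Nat.fib_add_two]; push_cast; ring
  have hEb : ∀ n, |E n| ≤ 4 * (Nat.fib n + Nat.fib (n+1)) := by
    intro n
    rw [← hc]
    refine (Finset.abs_sum_le_sum_abs _ _).trans ?_
    refine (Finset.sum_le_card_nsmul _ _ 4 (fun w _ => deg3_bound n w)).trans ?_
    rw [nsmul_eq_mul, mul_comm]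
  have hnum : ∀ n, ∑ w ∈ kbonWords n 2, (wDeg3 n (List.ofFn w) : ℝ) =
      E n + 2 * n * (Nat.fib n + Nat.fib (n+1))
        - 2 * ((2*(n+1)*Nat.fib n + n * Nat.fib (n+1)) / 5) := by
    intro n
    rw [← hS, ← hc, hE]
    simp only [Finset.sum_sub_distrib, Finset.sum_const, nsmul_eq_mul, ← Finset.mul_sum]
    ring
  have hden : ∀ n, ∑ w ∈ kbonWords n 2, (wVer n (List.ofFn w) : ℝ) =
      (2 * n + 2) * (Nat.fib n + Nat.fib (n+1))
        + 2 * ((2*(n+1)*Nat.fib n + n * Nat.fib (n+1)) / 5) := by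
    intro n
    rw [← hS, ← hc]
    simp only [wVer, Nat.cast_add, Nat.cast_mul, Nat.cast_ofNat, Finset.sum_add_distrib,
      Finset.sum_const, nsmul_eq_mul, ← Finset.mul_sum]
    ring
  have hpos : ∀ n : ℕ, 1 ≤ n → (0:ℝ) < n ∧ (0:ℝ) < Nat.fib n := by
    intro n hn
    exact ⟨by exact_mod_cast hn, by exact_mod_cast Nat.fib_pos.2 hn⟩
  have hE0 : Tendsto (fun n : ℕ => E n / (n * Nat.fib n)) atTop (nhds 0) := by
    have hb : Tendsto (fun n => 4 * (1 + r n) * i n) atTop (nhds 0) := by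
      have := ((hr.const_add 1).const_mul 4).mul hi
      simpa using this
    refine squeeze_zero_norm' ?_ hb
    filter_upwards [eventually_ge_atTop 1] with n hn
    obtain ⟨h1, h2⟩ := hpos n hn
    rw [Real.norm_eq_abs, abs_div, abs_of_pos (mul_pos h1 h2), div_le_iff₀ (mul_pos h1 h2)]
    refine (hEb n).trans (le_of_eq ?_)
    simp only [hrdef, hidef]
    field_simp
  have hN : Tendsto (fun n => E n / (n * Nat.fib n) + 2 * (1 + r n) - 2 / 5 * (2 * (1 + i n) + r n))
      atTop (nhds (0 + 2 * (1 + Real.goldenRatio) - 2 / 5 * (2 * (1 + 0) + Real.goldenRatio))) :=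
    (hE0.add ((hr.const_add 1).const_mul 2)).sub
      ((((hi.const_add 1).const_mul 2).add hr).const_mul (2/5))
  have hD : Tendsto (fun n => (2 + 2 * i n) * (1 + r n) + 2 / 5 * (2 * (1 + i n) + r n))
      atTop (nhds ((2 + 2 * 0) * (1 + Real.goldenRatio) + 2 / 5 * (2 * (1 + 0) + Real.goldenRatio))) :=
    (((hi.const_mul 2).const_add 2).mul (hr.const_add 1)).add
      ((((hi.const_add 1).const_mul 2).add hr).const_mul (2/5))
  have hg := Real.goldenRatio_pos
  have hlim := hN.div hD (by positivity)
  have hval : (0 + 2 * (1 + Real.goldenRatio) - 2 / 5 * (2 * (1 + 0) + Real.goldenRatio)) /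
      ((2 + 2 * 0) * (1 + Real.goldenRatio) + 2 / 5 * (2 * (1 + 0) + Real.goldenRatio))
      = (4 + Real.sqrt 5) / 11 := by
    rw [div_eq_div_iff (by positivity) (by norm_num)]
    have h5 : Real.sqrt 5 ^ 2 = 5 := Real.sq_sqrt (by norm_num)
    unfold Real.goldenRatio
    linear_combination (-6/5) * h5
  rw [hval] at hlim
  refine hlim.congr' ?_
  filter_upwards [eventually_ge_atTop 1] with n hn
  obtain ⟨h1, h2⟩ := hpos n hn
  have h3 : (0:ℝ) ≤ Nat.fib (n+1) := Nat.cast_nonneg _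
  rw [hnum, hden, Pi.div_apply]
  simp only [hrdef, hidef]
  rw [← mul_div_mul_left _ _ (mul_pos h1 h2).ne']
  congr 1 <;> field_simp
end
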